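/- Let CFG(G,O) be a simple chip firing game reaching a unique fixed point, with configuration space the finite ULD lattice L = CFG(G,O), and let κ : M → 𝒱 be the bijection sending each meet-irreducible m to the vertex fired in any cover c ⋖ c' with 𝔪(c,c') = m. Then for every configuration c ∈ CFG(G,O), the set ϑ(c) of vertices fired in any firing sequence from O to c equals κ(M \ M_c). -/

import Mathlib

open Classical

section CFGdefs

variable {V : Type*}

/-- Out-degree of a vertex in a directed multigraph with edge multiplicities `E`. -/
noncomputable def outDeg (E : V → V → ℕ) (v : V) : ℕ := ∑ᶠ u, E v u

/-- A vertex is a sink if all its outgoing edges are loops. -/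
def IsSink (E : V → V → ℕ) (v : V) : Prop := outDeg E v = E v v

/-- A vertex is firable in configuration `c`. -/
def Firable (E : V → V → ℕ) (c : V → ℕ) (v : V) : Prop :=
  ¬ IsSink E v ∧ outDeg E v ≤ c v

/-- The result of firing vertex `v` in configuration `c`. -/
noncomputable def fire (E : V → V → ℕ) (c : V → ℕ) (v : V) : V → ℕ :=
  fun u => if u = v then c v - outDeg E v + E v v else c u + E v u

/-- The configuration obtained by firing a list of vertices in order. -/
noncomputable def fireList (E : V → V → ℕ) : (V → ℕ) → List V → (V → ℕ)
  | c, [] => c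
  | c, v :: l => fireList E (fire E c v) l

/-- A list of vertices is a valid firing sequence from `c`. -/
def ValidSeq (E : V → V → ℕ) : (V → ℕ) → List V → Prop
  | _, [] => True
  | c, v :: l => Firable E c v ∧ ValidSeq E (fire E c v) l

/-- `c'` is reachable from `c` by a finite sequence of firings. -/
def Reaches (E : V → V → ℕ) (c c' : V → ℕ) : Prop :=
  ∃ l : List V, ValidSeq E c l ∧ fireList E c l = c'

/-- A configuration with no firable vertex. -/
def FixedPt (E : V → V → ℕ) (c : V → ℕ) : Prop := ∀ v, ¬ Firable E c v

/-- The chip firing game `CFG(G,O)` reaches a unique fixed point. -/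
def ReachesUFP (E : V → V → ℕ) (O : V → ℕ) : Prop :=
  ∃ fp : V → ℕ, Reaches E O fp ∧ FixedPt E fp ∧ ∀ c, Reaches E O c → Reaches E c fp

/-- The game is simple: in every firing sequence from `O` to the fixed point,
each vertex fires at most once. -/
def SimpleCFG (E : V → V → ℕ) (O : V → ℕ) : Prop :=
  ∀ l : List V, ValidSeq E O l → FixedPt E (fireList E O l) → l.Nodup

/-- Single firing step from `c` to `c'` by firing vertex `v`. -/
def FireStep (E : V → V → ℕ) (c : V → ℕ) (v : V) (c' : V → ℕ) : Prop :=
  Firable E c v ∧ fire E c v = c'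

/-- The partial order `L` is order-isomorphic to the configuration space of
`CFG(G,O)` ordered by reachability. -/
def Generates (E : V → V → ℕ) (O : V → ℕ) (L : Type*) [PartialOrder L] : Prop :=
  ∃ f : L ≃ {c : V → ℕ // Reaches E O c},
    ∀ a b : L, a ≤ b ↔ Reaches E (f a).val (f b).val

/-- The support graph is connected (as an undirected graph). -/
def ConnectedG (E : V → V → ℕ) : Prop :=
  ∀ u v : V, Relation.ReflTransGen (fun a b => 0 < E a b ∨ 0 < E b a) u v

/-- The support graph together with its initial data is an Abelian Sandpile Model. -/
def IsASM (E : V → V → ℕ) : Prop :=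
  ConnectedG E ∧ ∃ s : V, IsSink E s ∧ (∀ v, IsSink E v → v = s) ∧
    ∀ v₁ v₂ : V, v₁ ≠ v₂ → v₁ ≠ s → v₂ ≠ s → E v₁ v₂ = E v₂ v₁

/-- The directed multigraph has no directed cycle. -/
def AcyclicG (E : V → V → ℕ) : Prop :=
  ∀ v : V, ¬ Relation.TransGen (fun a b => 0 < E a b) v v

end CFGdefs

/-- `L` is generated by some chip firing game reaching a unique fixed point. -/
def MemLCFG (L : Type*) [PartialOrder L] : Prop :=
  ∃ (V : Type) (_ : Finite V) (E : V → V → ℕ) (O : V → ℕ),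
    ReachesUFP E O ∧ Generates E O L

/-- `L` is generated by some Abelian Sandpile Model reaching a unique fixed point. -/
def MemLASM (L : Type*) [PartialOrder L] : Prop :=
  ∃ (V : Type) (_ : Finite V) (E : V → V → ℕ) (O : V → ℕ),
    IsASM E ∧ ReachesUFP E O ∧ Generates E O L

section Latticedefs

variable {L : Type*} [Lattice L]

/-- `m` is meet-irreducible: it has exactly one upper cover. -/
def MeetIrred (m : L) : Prop := ∃! y, m ⋖ y

/-- `j` is join-irreducible: it has exactly one lower cover. -/
def JoinIrred (j : L) : Prop := ∃! y, y ⋖ j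

/-- The set `M_x \ M_y` of meet-irreducibles above `x` but not above `y`. -/
def MsetDiff (x y : L) : Set L := {m | MeetIrred m ∧ x ≤ m ∧ ¬ y ≤ m}

/-- The set `M \ M_a` of meet-irreducibles not above `a`. -/
def MnotAbove (a : L) : Set L := {m | MeetIrred m ∧ ¬ a ≤ m}

/-- `x⁺`: the join of all upper covers of `x`. -/
noncomputable def uplus [Fintype L] [OrderBot L] (x : L) : L :=
  Finset.univ.sup (fun y => if x ⋖ y then y else ⊥)

/-- `L` is upper locally distributive: for every `x ≠ ⊤` the interval `[x, x⁺]`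
is isomorphic to a Boolean lattice (a hypercube). -/
def IsULD (L : Type*) [Lattice L] [Fintype L] [BoundedOrder L] : Prop :=
  ∀ x : L, x ≠ ⊤ → ∃ n : ℕ, Nonempty (↥(Set.Icc x (uplus x)) ≃o Set (Fin n))

/-- `𝔘_m`: the minimal elements of `{x : ∃ y, x ⋖ y and 𝔪(x,y) = m}`. -/
def Uset (m : L) : Set L :=
  {x | Minimal (fun z => ∃ y, z ⋖ y ∧ MsetDiff z y = {m}) x}

/-- `𝔏_m`: the maximal elements of `{x : a ≰ x for every a ∈ 𝔘_m}`. -/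
def Lset (m : L) : Set L :=
  {x | Maximal (fun z => ∀ a ∈ Uset m, ¬ a ≤ z) x}

/-- `(w, e)` is a (non-negative integer) solution of the system `E(m)`. -/
def SolvesE [OrderBot L] (m : L) (w : ℕ) (e : L → ℕ) : Prop :=
  (Uset m = {(⊥ : L)} → 1 ≤ w) ∧
  (Uset m ≠ {(⊥ : L)} →
    (∀ a ∈ Lset m, (∑ᶠ x ∈ MnotAbove a, e x) < w) ∧
    (∀ a ∈ Uset m, w ≤ ∑ᶠ x ∈ MnotAbove a, e x))

/-- The system `E(m)` has a non-negative integer solution. -/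
def HasSolE [OrderBot L] (m : L) : Prop := ∃ w e, SolvesE m w e

/-- The variable `e_{x,m}` occurs in the system `𝔈(m)`. -/
def VarOccurs [OrderBot L] (x m : L) : Prop :=
  MeetIrred m ∧ Uset m ≠ {(⊥ : L)} ∧ ∃ a ∈ Uset m ∪ Lset m, x ∈ MnotAbove a

/-- `(W, Ee)` is a non-negative integer solution of the system `Ω`. -/
def SolvesOmega [OrderBot L] (W : L → ℕ) (Ee : L → L → ℕ) : Prop :=
  (∀ m : L, MeetIrred m → SolvesE m (W m) (fun x => Ee x m)) ∧
  (∀ m₁ m₂ : L, m₁ ≠ m₂ → VarOccurs m₁ m₂ → VarOccurs m₂ m₁ → Ee m₁ m₂ = Ee m₂ m₁)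

/-- The edge relation of the directed graph `𝒢` on the meet-irreducibles. -/
def Gedge (m₁ m₂ : L) : Prop :=
  MeetIrred m₁ ∧ MeetIrred m₂ ∧ ∃ a ∈ Uset m₂, m₁ ∈ MnotAbove a

end Latticedefs

/-- The system `Ω` has a non-negative integer solution. -/
def HasSolOmega (L : Type*) [Lattice L] [OrderBot L] : Prop :=
  ∃ W Ee, SolvesOmega (L := L) W Ee

/-- The directed graph `𝒢` on the meet-irreducibles is acyclic. -/
def GAcyclic (L : Type*) [Lattice L] : Prop :=
  ∀ m : L, ¬ Relation.TransGen (Gedge (L := L)) m m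

/-!
A firable vertex stays firable until it is fired, and firings of distinct firable vertices commute.
When no vertex can be fired twice, this forces every firing to be a cover relation `a ⋖ b` of the
configuration order. A firing sequence from `a` to `c` is thus a maximal chain, and each of its
covers contributes one vertex, `κ 𝔪(x, y)`. Since `M_a \ M_c` is the union of the singletons
`M_x \ M_y` over such a chain, `κ` maps it onto the set of fired vertices.

That `M_x \ M_y` is a singleton for `x ⋖ y` rests on two consequences of upper local
distributivity: upper semimodularity, by which the members of `M_x \ M_y` are maximal among the
elements not above `y`, and the fact that no join of elements above `x` but not above `y` is above
`y`, so that only one such maximal element lies above `x`.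
-/

section ChipFiring

variable {V : Type*} {E : V → V → ℕ} {c c' c'' : V → ℕ} {u v : V} {l l₁ l₂ : List V}

theorem validSeq_append :
    ValidSeq E c (l₁ ++ l₂) ↔ ValidSeq E c l₁ ∧ ValidSeq E (fireList E c l₁) l₂ := by
  induction l₁ generalizing c with
  | nil => simp [ValidSeq, fireList]
  | cons v l ih => simp [ValidSeq, fireList, ih, and_assoc]

theorem fireList_append (l₁ l₂ : List V) :
    fireList E c (l₁ ++ l₂) = fireList E (fireList E c l₁) l₂ := by
  induction l₁ generalizing c with
  | nil => rfl
  | cons _ _ ih => exact ih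

theorem Reaches.trans (h : Reaches E c c') (h' : Reaches E c' c'') : Reaches E c c'' := by
  obtain ⟨l, hl, rfl⟩ := h
  obtain ⟨l', hl', rfl⟩ := h'
  exact ⟨l ++ l', validSeq_append.2 ⟨hl, hl'⟩, fireList_append l l'⟩

theorem Firable.reaches_fire (hv : Firable E c v) : Reaches E c (fire E c v) :=
  ⟨[v], ⟨hv, trivial⟩, rfl⟩

theorem Firable.fire_of_ne (hv : Firable E c v) (hvu : v ≠ u) : Firable E (fire E c u) v :=
  ⟨hv.1, hv.2.trans (by simp [fire, hvu])⟩

theorem fire_comm (hu : Firable E c u) (hv : Firable E c v) (huv : u ≠ v) :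
    fire E (fire E c u) v = fire E (fire E c v) u := by
  have hcu := hu.2
  have hcv := hv.2
  funext w
  simp only [fire]
  grind

theorem Firable.fireList_of_notMem (hv : Firable E c v) (hvl : v ∉ l) :
    Firable E (fireList E c l) v := by
  induction l generalizing c with
  | nil => exact hv
  | cons u l ih =>
    rw [List.mem_cons, not_or] at hvl
    exact ih (hv.fire_of_ne hvl.1) hvl.2

theorem ValidSeq.fire_of_notMem (hl : ValidSeq E c l) (hv : Firable E c v) (hvl : v ∉ l) :
    ValidSeq E (fire E c v) l := by
  induction l generalizing c with
  | nil => trivial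
  | cons u l ih =>
    rw [List.mem_cons, not_or] at hvl
    refine ⟨hl.1.fire_of_ne (Ne.symm hvl.1), ?_⟩
    rw [fire_comm hv hl.1 hvl.1]
    exact ih hl.2 (hv.fire_of_ne hvl.1) hvl.2

theorem ValidSeq.fireList_fire_of_notMem (hl : ValidSeq E c l) (hv : Firable E c v) (hvl : v ∉ l) :
    fireList E (fire E c v) l = fire E (fireList E c l) v := by
  induction l generalizing c with
  | nil => rfl
  | cons u l ih =>
    rw [List.mem_cons, not_or] at hvl
    rw [fireList, fireList, fire_comm hv hl.1 hvl.1]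
    exact ih hl.2 (hv.fire_of_ne hvl.1) hvl.2

/-- The game started at `c` is nonrepeating: no firing sequence from `c` fires a vertex twice.
Unlike simplicity, this refers to no fixed point and passes to reachable configurations. -/
def Nonrepeating (E : V → V → ℕ) (c : V → ℕ) : Prop :=
  ∀ l : List V, ValidSeq E c l → l.Nodup

theorem SimpleCFG.nonrepeating (hSimple : SimpleCFG E c) (hUFP : ReachesUFP E c) :
    Nonrepeating E c := by
  intro l hl
  obtain ⟨fp, -, hfp, hreach⟩ := hUFP
  obtain ⟨s, hs, hsfp⟩ := hreach _ ⟨l, hl, rfl⟩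
  have hfixed : FixedPt E (fireList E c (l ++ s)) := by rwa [fireList_append, hsfp]
  exact (hSimple (l ++ s) (validSeq_append.2 ⟨hl, hs⟩) hfixed).of_append_left

namespace Nonrepeating

theorem of_reaches (h : Nonrepeating E c) (hc : Reaches E c c') : Nonrepeating E c' := by
  obtain ⟨p, hp, rfl⟩ := hc
  exact fun l hl => (h (p ++ l) (validSeq_append.2 ⟨hp, hl⟩)).of_append_right

theorem eq_nil_of_fireList_eq_self (h : Nonrepeating E c) (hl : ValidSeq E c l)
    (hlc : fireList E c l = c) : l = [] := by
  have hll : ValidSeq E c (l ++ l) := validSeq_append.2 ⟨hl, by rwa [hlc]⟩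
  have hdisj := List.disjoint_of_nodup_append (h _ hll)
  exact List.eq_nil_iff_forall_not_mem.2 fun v hv => hdisj hv hv

theorem eq_singleton_of_fireList_eq_fire (h : Nonrepeating E c) (hv : Firable E c v)
    (hl : ValidSeq E c l) (hlv : fireList E c l = fire E c v) : l = [v] := by
  have hvl : v ∈ l := by
    by_contra hvl
    have hagain : Firable E (fire E c v) v := hlv ▸ hv.fireList_of_notMem hvl
    simpa using h [v, v] ⟨hv, hagain, trivial⟩
  obtain ⟨p, q, rfl⟩ := List.append_of_mem hvl
  have hvp : v ∉ p := fun hvp =>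
    List.disjoint_of_nodup_append (h _ hl) hvp List.mem_cons_self
  obtain ⟨hp, -, hq⟩ := validSeq_append.1 hl
  -- Firing `v` first turns `p ++ v :: q` into `v :: (p ++ q)`, whose tail loops at `fire E c v`.
  have hcomm := hp.fireList_fire_of_notMem hv hvp
  rw [← hcomm] at hq
  have hloop : fireList E (fire E c v) (p ++ q) = fire E c v := by
    rw [fireList_append, hcomm, ← hlv, fireList_append, fireList]
  have hnil := (h.of_reaches hv.reaches_fire).eq_nil_of_fireList_eq_self
    (validSeq_append.2 ⟨hp.fire_of_notMem hv hvp, hq⟩) hloop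
  obtain ⟨rfl, rfl⟩ := List.append_eq_nil_iff.1 hnil
  rfl

end Nonrepeating

end ChipFiring

section UpperSemimodular

variable {L : Type*} [Lattice L]

theorem covBy_sup_of_covBy_of_covBy [IsWeakUpperModularLattice L] {x y z : L}
    (hxy : x ⋖ y) (hxz : x ⋖ z) (hyz : y ≠ z) : z ⋖ y ⊔ z := by
  have hinf : z ⊓ y = x := hxz.wcovBy.inf_eq hxy.wcovBy hyz.symm
  rw [sup_comm]
  exact covBy_sup_of_inf_covBy_of_inf_covBy_left (by rwa [hinf]) (by rwa [hinf])

theorem covBy_sup_of_covBy_of_not_le [IsWeakUpperModularLattice L]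
    [WellFoundedGT L] [IsStronglyAtomic L] {x y z : L} (hxy : x ⋖ y) (hxz : x ≤ z)
    (hyz : ¬ y ≤ z) : z ⋖ y ⊔ z := by
  induction x using WellFoundedGT.induction generalizing y with
  | ind x ih =>
    obtain rfl | hlt := hxz.eq_or_lt
    · rwa [sup_eq_left.2 hxy.le]
    · obtain ⟨w, hxw, hwz⟩ := exists_covBy_le_of_lt hlt
      have hyw : y ≠ w := fun h => hyz (h ▸ hwz)
      have hcov := ih w hxw.lt (covBy_sup_of_covBy_of_covBy hxy hxw hyw) hwz
        fun h => hyz (le_sup_left.trans h)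
      rwa [sup_assoc, sup_eq_right.2 hwz] at hcov

end UpperSemimodular

section MeetIrreducible

variable {L : Type*} [Lattice L] {x y z m : L}

theorem meetIrred_of_maximal_not_le (hm : Maximal (fun z => ¬ y ≤ z) m) : MeetIrred m := by
  have hlt : m < y ⊔ m := right_lt_sup.2 hm.prop
  have hle : ∀ z, m < z → y ⊔ m ≤ z := fun z hz =>
    sup_le (not_not.1 (hm.not_prop_of_gt hz)) hz.le
  exact ⟨y ⊔ m, ⟨hlt, fun z hz hz' => hz'.not_ge (hle z hz)⟩,
    fun z hz => ((hz.eq_or_eq hlt.le (hle z hz.lt)).resolve_left hlt.ne').symm⟩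

theorem msetDiff_nonempty [WellFoundedGT L] (hyx : ¬ y ≤ x) : (MsetDiff x y).Nonempty := by
  obtain ⟨m, hxm, hm⟩ := exists_maximal_ge_of_wellFoundedGT (fun z => ¬ y ≤ z) x hyx
  exact ⟨m, meetIrred_of_maximal_not_le hm, hxm, hm.prop⟩

theorem msetDiff_union (hxy : x ≤ y) (hyz : y ≤ z) :
    MsetDiff x y ∪ MsetDiff y z = MsetDiff x z := by
  ext m
  have hxm : y ≤ m → x ≤ m := hxy.trans
  have hym : z ≤ m → y ≤ m := hyz.trans
  simp only [MsetDiff, Set.mem_union, Set.mem_ofPred_eq]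
  tauto

theorem maximal_not_le_of_mem_msetDiff [IsWeakUpperModularLattice L] [WellFoundedGT L]
    [IsStronglyAtomic L] (hxy : x ⋖ y) (hm : m ∈ MsetDiff x y) :
    Maximal (fun z => ¬ y ≤ z) m := by
  obtain ⟨hirr, hxm, hym⟩ := hm
  refine maximal_iff_forall_gt.2 ⟨hym, fun z hmz => not_not.2 ?_⟩
  obtain ⟨w, hmw, hwz⟩ := exists_covBy_le_of_lt hmz
  have hcover : y ⊔ m = w := hirr.unique (covBy_sup_of_covBy_of_not_le hxy hxm hym) hmw
  exact (le_sup_left.trans hcover.le).trans hwz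

end MeetIrreducible

section UpperLocallyDistributive

theorem le_uplus {L : Type*} [Lattice L] [Fintype L] [OrderBot L] {x y : L} (hxy : x ⋖ y) :
    y ≤ uplus x := by
  have hy := Finset.le_sup (f := fun y : L => if x ⋖ y then y else ⊥) (Finset.mem_univ y)
  rwa [if_pos hxy] at hy

variable {L : Type*} [Lattice L] [Fintype L] [BoundedOrder L] {x y z w : L}

namespace IsULD

theorem inf_sup_left_of_mem_Icc (hULD : IsULD L) {a b c : L} (ha : a ∈ Set.Icc x (uplus x))
    (hb : b ∈ Set.Icc x (uplus x)) (hc : c ∈ Set.Icc x (uplus x)) :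
    a ⊓ (b ⊔ c) = a ⊓ b ⊔ a ⊓ c := by
  obtain rfl | hx := eq_or_ne x ⊤
  · simp [top_le_iff.1 ha.1, top_le_iff.1 hb.1]
  obtain ⟨n, ⟨e⟩⟩ := hULD x hx
  have hIcc : ∀ a b c : Set.Icc x (uplus x), a ⊓ (b ⊔ c) = a ⊓ b ⊔ a ⊓ c := fun a b c =>
    e.injective (by simp only [map_inf, map_sup, inf_sup_left])
  exact congrArg Subtype.val (hIcc ⟨a, ha⟩ ⟨b, hb⟩ ⟨c, hc⟩)

theorem isWeakUpperModularLattice (hULD : IsULD L) : IsWeakUpperModularLattice L where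
  covBy_sup_of_inf_covBy_covBy {a b} ha hb := by
    refine ⟨left_lt_sup.2 fun hba => hb.lt.ne (inf_eq_right.2 hba), fun w haw hw => ?_⟩
    have hw_eq : w = a ⊔ w ⊓ b := calc
      w = w ⊓ (a ⊔ b) := (inf_eq_left.2 hw.le).symm
      _ = w ⊓ a ⊔ w ⊓ b := hULD.inf_sup_left_of_mem_Icc
        ⟨ha.le.trans haw.le, hw.le.trans (sup_le (le_uplus ha) (le_uplus hb))⟩
        ⟨ha.le, le_uplus ha⟩ ⟨hb.le, le_uplus hb⟩
      _ = a ⊔ w ⊓ b := by rw [inf_eq_right.2 haw.le]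
    rcases hb.eq_or_eq (le_inf (ha.le.trans haw.le) hb.le) inf_le_right with h | h
    · rw [h, sup_eq_left.2 ha.le] at hw_eq
      exact haw.ne' hw_eq
    · rw [h] at hw_eq
      exact hw.ne hw_eq

theorem not_le_sup_of_covBy_of_ne (hULD : IsULD L) (hxy : x ⋖ y) (hxz : x ⋖ z)
    (hxw : x ⋖ w) (hyz : y ≠ z) (hyw : y ≠ w) : ¬ y ≤ z ⊔ w := by
  intro hle
  have hyx : y = x := calc
    y = y ⊓ (z ⊔ w) := (inf_eq_left.2 hle).symm
    _ = y ⊓ z ⊔ y ⊓ w := hULD.inf_sup_left_of_mem_Icc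
      ⟨hxy.le, le_uplus hxy⟩ ⟨hxz.le, le_uplus hxz⟩ ⟨hxw.le, le_uplus hxw⟩
    _ = x := by
      rw [hxy.wcovBy.inf_eq hxz.wcovBy hyz, hxy.wcovBy.inf_eq hxw.wcovBy hyw, sup_idem]
  exact hxy.lt.ne' hyx

theorem not_le_sup_of_covBy_of_not_le (hULD : IsULD L) (hxy : x ⋖ y) (hxz : x ≤ z)
    (hxw : x ≤ w) (hyz : ¬ y ≤ z) (hyw : ¬ y ≤ w) : ¬ y ≤ z ⊔ w := by
  induction x using WellFoundedGT.induction generalizing y z w with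
  | ind x ih =>
    have := hULD.isWeakUpperModularLattice
    obtain rfl | hltz := hxz.eq_or_lt
    · rwa [sup_eq_right.2 hxw]
    obtain rfl | hltw := hxw.eq_or_lt
    · rwa [sup_eq_left.2 hxz]
    have of_common_cover : ∀ {p u v : L}, x ⋖ p → p ≤ u → p ≤ v → ¬ y ≤ u → ¬ y ≤ v →
        ¬ y ≤ u ⊔ v := by
      intro p u v hxp hpu hpv hyu hyv hle
      have hyp : y ≠ p := fun h => hyu (h ▸ hpu)
      exact ih p hxp.lt (covBy_sup_of_covBy_of_covBy hxy hxp hyp) hpu hpv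
        (fun h => hyu (le_sup_left.trans h)) (fun h => hyv (le_sup_left.trans h))
        (sup_le hle (hpu.trans le_sup_left))
    -- Reach `z ⊔ w` by two joins, each of elements with a common lower bound `p` or `q` above `x`:
    -- first `z ⊔ (p ⊔ q) = z ⊔ q`, then `(z ⊔ q) ⊔ w = z ⊔ w`.
    obtain ⟨p, hxp, hpz⟩ := exists_covBy_le_of_lt hltz
    obtain ⟨q, hxq, hqw⟩ := exists_covBy_le_of_lt hltw
    have hpq : ¬ y ≤ p ⊔ q := hULD.not_le_sup_of_covBy_of_ne hxy hxp hxq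
      (fun h => hyz (h ▸ hpz)) (fun h => hyw (h ▸ hqw))
    have hzq : ¬ y ≤ z ⊔ q := by
      have hzpq : ¬ y ≤ z ⊔ (p ⊔ q) := of_common_cover hxp hpz le_sup_left hyz hpq
      rwa [← sup_assoc, sup_eq_left.2 hpz] at hzpq
    have hzqw : ¬ y ≤ z ⊔ q ⊔ w := of_common_cover hxq le_sup_right hqw hzq hyw
    rwa [sup_assoc, sup_eq_right.2 hqw] at hzqw

theorem msetDiff_subsingleton (hULD : IsULD L) (hxy : x ⋖ y) : (MsetDiff x y).Subsingleton := by
  have := hULD.isWeakUpperModularLattice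
  intro m hm m' hm'
  have hsup : ¬ y ≤ m ⊔ m' := hULD.not_le_sup_of_covBy_of_not_le hxy hm.2.1 hm'.2.1 hm.2.2 hm'.2.2
  calc
    m = m ⊔ m' := (maximal_not_le_of_mem_msetDiff hxy hm).eq_of_le hsup le_sup_left
    _ = m' := ((maximal_not_le_of_mem_msetDiff hxy hm').eq_of_le hsup le_sup_right).symm

theorem exists_msetDiff_eq_singleton (hULD : IsULD L) (hxy : x ⋖ y) :
    ∃ m, MsetDiff x y = {m} := by
  obtain ⟨m, hm⟩ := msetDiff_nonempty hxy.lt.not_ge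
  exact ⟨m, (hULD.msetDiff_subsingleton hxy).eq_singleton_of_mem hm⟩

end IsULD

end UpperLocallyDistributive

section ConfigurationSpace

variable {V : Type*} {E : V → V → ℕ} {O : V → ℕ}

theorem covBy_of_fireStep {L : Type*} [PartialOrder L] (hO : Nonrepeating E O)
    (f : L ≃ {c : V → ℕ // Reaches E O c})
    (hf : ∀ a b : L, a ≤ b ↔ Reaches E (f a).val (f b).val)
    {a b : L} {v : V} (h : FireStep E (f a).val v (f b).val) : a ⋖ b := by
  obtain ⟨hv, hfire⟩ := h
  have ha : Nonrepeating E (f a).val := hO.of_reaches (f a).2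
  refine ⟨lt_of_le_of_ne ((hf a b).2 (hfire ▸ hv.reaches_fire)) ?_, fun d had hdb => ?_⟩
  · rintro rfl
    exact List.cons_ne_nil v []
      (ha.eq_nil_of_fireList_eq_self (l := [v]) ⟨hv, trivial⟩ hfire)
  · obtain ⟨l₁, hl₁, h₁⟩ := (hf a d).1 had.le
    obtain ⟨l₂, hl₂, h₂⟩ := (hf d b).1 hdb.le
    have hsing : l₁ ++ l₂ = [v] := ha.eq_singleton_of_fireList_eq_fire hv
      (validSeq_append.2 ⟨hl₁, by rwa [h₁]⟩) (by rw [fireList_append, h₁, h₂, hfire])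
    rcases List.append_eq_singleton_iff.1 hsing with ⟨rfl, -⟩ | ⟨-, rfl⟩
    · exact had.ne (f.injective (Subtype.ext h₁))
    · exact hdb.ne (f.injective (Subtype.ext h₂))

/-- `κ` labels the meet-irreducibles by the vertices fired along the covers of the configuration
lattice: `κ m` is the vertex whose firing gives a cover `c ⋖ c'` with `𝔪(c, c') = m`. The lattice
elements are identified with configurations through `f`. -/
def IsFiringLabelling {L : Type*} [Lattice L] (f : L ≃ {c : V → ℕ // Reaches E O c})
    (κ : {m : L // MeetIrred m} → V) : Prop :=
  ∀ (m : {m : L // MeetIrred m}) (c c' : L) (v : V),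
    c ⋖ c' → MsetDiff c c' = {m.val} → FireStep E (f c).val v (f c').val → κ m = v

variable {L : Type*} [Lattice L] [Fintype L] [BoundedOrder L]

theorem image_msetDiff_of_fireStep (hO : Nonrepeating E O) (hULD : IsULD L)
    (f : L ≃ {c : V → ℕ // Reaches E O c})
    (hf : ∀ a b : L, a ≤ b ↔ Reaches E (f a).val (f b).val)
    {κ : {m : L // MeetIrred m} → V} (hκ : IsFiringLabelling f κ)
    {a b : L} {v : V} (h : FireStep E (f a).val v (f b).val) :
    κ '' (Subtype.val ⁻¹' MsetDiff a b) = {v} := by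
  have hab : a ⋖ b := covBy_of_fireStep hO f hf h
  obtain ⟨m, hm⟩ := hULD.exists_msetDiff_eq_singleton hab
  have hirr : MeetIrred m := (hm.ge rfl).1
  have hpre : (Subtype.val ⁻¹' {m} : Set {m : L // MeetIrred m}) = {⟨m, hirr⟩} := by
    ext
    simp [Subtype.ext_iff]
  rw [hm, hpre, Set.image_singleton, hκ ⟨m, hirr⟩ a b v hab hm h]

theorem setOf_mem_eq_image_msetDiff (hO : Nonrepeating E O) (hULD : IsULD L)
    (f : L ≃ {c : V → ℕ // Reaches E O c})
    (hf : ∀ a b : L, a ≤ b ↔ Reaches E (f a).val (f b).val)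
    {κ : {m : L // MeetIrred m} → V} (hκ : IsFiringLabelling f κ)
    {a c : L} {l : List V} (hl : ValidSeq E (f a).val l)
    (hlc : fireList E (f a).val l = (f c).val) :
    {v | v ∈ l} = κ '' (Subtype.val ⁻¹' MsetDiff a c) := by
  induction l generalizing a with
  | nil =>
    obtain rfl : a = c := f.injective (Subtype.ext hlc)
    simp [MsetDiff]
  | cons u l ih =>
    obtain ⟨hu, hl⟩ := hl
    obtain ⟨b, hb⟩ : ∃ b : L, fire E (f a).val u = (f b).val :=
      ⟨f.symm ⟨_, (f a).2.trans hu.reaches_fire⟩, by simp⟩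
    have hab : a ≤ b := (covBy_of_fireStep hO f hf ⟨hu, hb⟩).le
    rw [hb] at hl
    rw [fireList, hb] at hlc
    have hbc : b ≤ c := (hf b c).2 ⟨l, hl, hlc⟩
    calc
      {v | v ∈ u :: l} = {u} ∪ {v | v ∈ l} := by
        ext
        simp
      _ = κ '' (Subtype.val ⁻¹' MsetDiff a b) ∪ κ '' (Subtype.val ⁻¹' MsetDiff b c) := by
        rw [image_msetDiff_of_fireStep hO hULD f hf hκ ⟨hu, hb⟩, ih hl hlc]
      _ = κ '' (Subtype.val ⁻¹' MsetDiff a c) := by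
        rw [← Set.image_union, ← Set.preimage_union, msetDiff_union hab hbc]

end ConfigurationSpace

theorem stmt2_general {V : Type*} {E : V → V → ℕ} {O : V → ℕ} (hO : Nonrepeating E O)
    {L : Type*} [Lattice L] [Fintype L] [BoundedOrder L] (hULD : IsULD L)
    (f : L ≃ {c : V → ℕ // Reaches E O c})
    (hf : ∀ a b : L, a ≤ b ↔ Reaches E (f a).val (f b).val)
    {κ : {m : L // MeetIrred m} → V} (hκ : IsFiringLabelling f κ)
    (c : L) (l : List V) (hl : ValidSeq E O l) (hlc : fireList E O l = (f c).val) (v : V) :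
    v ∈ l ↔ ∃ m : {m : L // MeetIrred m}, ¬ c ≤ m.val ∧ κ m = v := by
  obtain ⟨a, ha⟩ : ∃ a : L, (f a).val = O := ⟨f.symm ⟨O, [], trivial, rfl⟩, by simp⟩
  have ha_le : ∀ b, a ≤ b := fun b => (hf a b).2 (by rw [ha]; exact (f b).2)
  have hfired : {v | v ∈ l} = κ '' (Subtype.val ⁻¹' MsetDiff a c) :=
    setOf_mem_eq_image_msetDiff hO hULD f hf hκ (by rwa [ha]) (by rw [ha, hlc])
  have hdiff : ∀ m : {m : L // MeetIrred m}, m.val ∈ MsetDiff a c ↔ ¬ c ≤ m.val := fun m =>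
    ⟨fun h => h.2.2, fun h => ⟨m.2, ha_le m, h⟩⟩
  calc
    v ∈ l ↔ ∃ m : {m : L // MeetIrred m}, m.val ∈ MsetDiff a c ∧ κ m = v :=
      Set.ext_iff.1 hfired v
    _ ↔ ∃ m : {m : L // MeetIrred m}, ¬ c ≤ m.val ∧ κ m = v := by simp only [hdiff]

/-- for a simple CFG reaching a unique fixed point generating the finite
ULD lattice `L`, with `κ` the bijection sending each meet-irreducible `m` to the vertex
fired in any cover `c ⋖ c'` with `𝔪(c,c') = m`, for every configuration `c` the set
`ϑ(c)` of vertices fired in any firing sequence from `O` to `c` equals `κ(M \ M_c)`. -/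
theorem stmt2 {V : Type*} [Finite V] (E : V → V → ℕ) (O : V → ℕ)
    (hUFP : ReachesUFP E O) (hSimple : SimpleCFG E O)
    {L : Type*} [Lattice L] [Fintype L] [BoundedOrder L] (hULD : IsULD L)
    (f : L ≃ {c : V → ℕ // Reaches E O c})
    (hf : ∀ a b : L, a ≤ b ↔ Reaches E (f a).val (f b).val)
    (κ : {m : L // MeetIrred m} → V)
    (hκ : ∀ (m : {m : L // MeetIrred m}) (c c' : L) (v : V),
      c ⋖ c' → MsetDiff c c' = {m.val} → FireStep E (f c).val v (f c').val → κ m = v) :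
    ∀ (c : L) (l : List V), ValidSeq E O l → fireList E O l = (f c).val →
      ∀ v : V, v ∈ l ↔ ∃ m : {m : L // MeetIrred m}, ¬ c ≤ m.val ∧ κ m = v :=
  stmt2_general (hSimple.nonrepeating hUFP) hULD f hf hκ
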